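/- Let A be as in the context and let B := 1 + 2i(A − i·1)⁻¹ be its Cayley transform. Let φ̃ : ℂ → ℂ be smooth and compactly supported with 1 ∉ supp φ̃, such that for every N ∈ ℕ there is a constant C_N with |∂φ̃/∂w̄(w)| ≤ C_N·| |w| − 1 |^N for all w ∈ ℂ. Define ψ(z) = φ̃((z+i)/(z−i)) for z ≠ i and ψ(i) = 0. Then both of the following Bochner integrals converge and are equal: −(1/π)∫_ℂ (∂φ̃/∂w̄)(w)·(w·1 − B)⁻¹ L(dw) = −(1/π)∫_ℂ (∂ψ/∂z̄)(z)·(z·1 − A)⁻¹ L(dz). -/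

import Mathlib

open MeasureTheory Complex Real

noncomputable section

/-- The Cauchy–Riemann operator `∂F/∂z̄ = (∂F/∂x + i ∂F/∂y)/2`. -/
def dbar (F : ℂ → ℂ) (z : ℂ) : ℂ :=
  (fderiv ℝ F z 1 + Complex.I * fderiv ℝ F z Complex.I) / 2

/-- The resolvent `(z·1 − P)⁻¹` (equal to `0` when `z·1 − P` is not invertible). -/
def res {B : Type*} [NormedAddCommGroup B] [NormedSpace ℂ B] (P : B →L[ℂ] B) (z : ℂ) :
    B →L[ℂ] B := Ring.inverse (z • (1 : B →L[ℂ] B) - P)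

/-- The spectrum of `A` is real. -/
def RealSpectrum {B : Type*} [NormedAddCommGroup B] [NormedSpace ℂ B]
    (A : B →L[ℂ] B) : Prop := ∀ z ∈ spectrum ℂ A, z.im = 0

/-- The resolvent of `A` has locally temperate growth near `ℝ`. -/
def TemperateResolventLoc {B : Type*} [NormedAddCommGroup B] [NormedSpace ℂ B]
    (A : B →L[ℂ] B) : Prop :=
  ∀ R > (0:ℝ), ∃ C N : ℝ, 0 ≤ C ∧ 0 ≤ N ∧ ∀ z : ℂ, z.im ≠ 0 → ‖z‖ ≤ R →
    ‖res A z‖ ≤ C * |z.im| ^ (-N)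

lemma cct_cayley_hasDerivAt {z : ℂ} (hz : z ≠ I) :
    HasDerivAt (fun z : ℂ => (z + I) / (z - I)) (-2 * I / (z - I) ^ 2) z := by
  have h0 : z - I ≠ 0 := sub_ne_zero.2 hz
  have h := ((hasDerivAt_id z).add_const I).div ((hasDerivAt_id z).sub_const I) h0
  refine HasDerivAt.congr_deriv (f := fun z : ℂ => (z + I) / (z - I)) h ?_
  simp only [id_eq]
  ring

lemma cct_linear (L : ℂ →L[ℝ] ℂ) (c : ℂ) : L c = c.re * L 1 + c.im * L I := by
  have h : c = c.re • (1 : ℂ) + c.im • I := by simp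
  conv_lhs => rw [h]
  rw [map_add, map_smul, map_smul]
  simp

lemma cct_dbar_comp (φ : ℂ → ℂ) (hφ : Differentiable ℝ φ) (c : ℂ → ℂ) (c' z : ℂ)
    (hc : HasDerivAt c c' z) :
    dbar (fun z => φ (c z)) z = dbar φ (c z) * (starRingEnd ℂ) c' := by
  have h1 : HasFDerivAt c ((ContinuousLinearMap.toSpanSingleton ℂ c').restrictScalars ℝ) z :=
    hc.hasFDerivAt.restrictScalars ℝ
  have h2 := ((hφ (c z)).hasFDerivAt.comp z h1).fderiv
  have h3 : (φ ∘ c) = fun z => φ (c z) := rfl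
  rw [h3] at h2
  unfold dbar
  rw [h2]
  simp only [ContinuousLinearMap.comp_apply, ContinuousLinearMap.coe_restrictScalars',
    ContinuousLinearMap.toSpanSingleton_apply, smul_eq_mul, one_mul]
  rw [cct_linear _ c', cct_linear _ (I * c')]
  have hconj : (starRingEnd ℂ) c' = c'.re - c'.im * I := by
    apply Complex.ext <;> simp
  rw [hconj]
  simp only [mul_re, mul_im, I_re, I_im]
  push_cast
  ring_nf
  simp only [I_sq]
  ring

lemma cct_dbar_mul (φ : ℂ → ℂ) (hφ : Differentiable ℝ φ) (c : ℂ → ℂ) (c' z : ℂ)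
    (hc : HasDerivAt c c' z) :
    dbar (fun z => φ z * c z) z = dbar φ z * c z := by
  have h1 : HasFDerivAt c ((ContinuousLinearMap.toSpanSingleton ℂ c').restrictScalars ℝ) z :=
    hc.hasFDerivAt.restrictScalars ℝ
  have h2 := ((hφ z).hasFDerivAt.mul h1).fderiv
  have h3 : (φ * c) = fun z => φ z * c z := rfl
  try rw [h3] at h2
  unfold dbar
  rw [h2]
  simp only [_root_.add_apply, _root_.smul_apply,
    ContinuousLinearMap.coe_restrictScalars',
    ContinuousLinearMap.toSpanSingleton_apply, smul_eq_mul, one_mul]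
  ring_nf
  simp only [I_sq]
  ring

lemma cct_dbar_zero (φ : ℂ → ℂ) (w : ℂ) (hw : w ∉ tsupport φ) : dbar φ w = 0 := by
  unfold dbar
  rw [fderiv_of_notMem_tsupport ℝ hw]
  simp

lemma cct_dbar_continuous (φ : ℂ → ℂ) (hφ : ContDiff ℝ 1 φ) : Continuous (dbar φ) := by
  have h := hφ.continuous_fderiv one_ne_zero
  unfold dbar
  fun_prop

lemma cct_integrable_dbar (g : ℂ → ℂ) (hg : ContDiff ℝ 1 g) (hs : HasCompactSupport g) :
    Integrable (dbar g) := by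
  apply (cct_dbar_continuous g hg).integrable_of_hasCompactSupport
  apply HasCompactSupport.intro hs
  intro x hx
  exact cct_dbar_zero g x hx

lemma cct_integral_dbar (g : ℂ → ℂ) (hg : ContDiff ℝ 1 g) (hs : HasCompactSupport g) :
    ∫ w, dbar g w = 0 := by
  have hc := hg.continuous_fderiv one_ne_zero
  have hi : ∀ v : ℂ, Integrable (fun x => fderiv ℝ g x v) := by
    intro v
    apply Continuous.integrable_of_hasCompactSupport (by fun_prop)
    apply HasCompactSupport.intro hs
    intro x hx
    rw [fderiv_of_notMem_tsupport ℝ hx]; rfl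
  have hz : ∀ v : ℂ, ∫ x, fderiv ℝ g x v = 0 := by
    intro v
    have := integral_mul_fderiv_eq_neg_fderiv_mul_of_integrable (𝕜 := ℂ) (μ := volume)
      (f := fun _ : ℂ => (1:ℂ)) (g := g) (v := v) (by simp) (by simpa using hi v)
      (by simpa using hg.continuous.integrable_of_hasCompactSupport hs)
      (fun x _ => differentiableAt_const _)
      (fun x _ => hg.differentiable one_ne_zero x)
    simpa using this
  unfold dbar
  rw [integral_div, integral_add (hi 1) ((hi I).const_mul I), integral_const_mul, hz, hz]
  simp

lemma cct_pole (φ : ℂ → ℂ) (hφ : ContDiff ℝ 1 φ) (hs : HasCompactSupport φ)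
    (h1 : (1:ℂ) ∉ tsupport φ) :
    Integrable (fun w => dbar φ w * (w - 1)⁻¹) ∧ ∫ w, dbar φ w * (w - 1)⁻¹ = 0 := by
  set g : ℂ → ℂ := fun w => φ w * (w - 1)⁻¹ with hg
  have hsupp : tsupport g ⊆ tsupport φ := tsupport_mul_subset_left
  have hgs : HasCompactSupport g := hs.mul_right
  have hgc : ContDiff ℝ 1 g := by
    rw [contDiff_iff_contDiffAt]
    intro w
    by_cases hw : w = 1
    · have : g =ᶠ[nhds w] fun _ => 0 := by
        subst hw
        have := notMem_tsupport_iff_eventuallyEq.1 (fun h => h1 (hsupp h))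
        exact this
      exact contDiffAt_const.congr_of_eventuallyEq this
    · apply hφ.contDiffAt.mul
      apply ContDiffAt.inv
      · fun_prop
      · exact sub_ne_zero.2 hw
  have he : dbar g = fun w => dbar φ w * (w - 1)⁻¹ := by
    funext w
    by_cases hw : w = 1
    · subst hw
      rw [cct_dbar_zero g 1 (fun h => h1 (hsupp h))]; simp
    · exact cct_dbar_mul φ (hφ.differentiable one_ne_zero) _ _ w
        (((hasDerivAt_id w).sub_const 1).inv (sub_ne_zero.2 hw))
  rw [← he]
  have h2 := cct_integral_dbar g hgc hgs
  exact ⟨cct_integrable_dbar g hgc hgs, h2⟩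

lemma cct_det (c : ℂ) :
    ((ContinuousLinearMap.toSpanSingleton ℂ c).restrictScalars ℝ : ℂ →L[ℝ] ℂ).det
      = normSq c := by
  rw [← Algebra.norm_complex_apply, Algebra.norm_apply]
  unfold ContinuousLinearMap.det
  congr 1
  ext <;> simp [mul_comm]

lemma cct_ae_im : ∀ᵐ z : ℂ, z.im ≠ 0 := by
  have h := Measure.addHaar_submodule (volume : Measure ℂ) (LinearMap.ker Complex.imLm) (by
    intro h
    have : I ∈ LinearMap.ker Complex.imLm := by rw [h]; trivial
    simp at this)
  rw [ae_iff]
  convert h using 2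
  ext z
  simp

lemma cct_isUnit {B : Type*} [NormedAddCommGroup B] [NormedSpace ℂ B]
    (A : B →L[ℂ] B) (hspec : RealSpectrum A) {z : ℂ} (hz : z.im ≠ 0) :
    IsUnit (z • (1 : B →L[ℂ] B) - A) := by
  by_contra h
  apply hz
  apply hspec z
  rw [spectrum.mem_iff]
  rwa [Algebra.algebraMap_eq_smul_one]

lemma cct_res {B : Type*} [NormedAddCommGroup B] [NormedSpace ℂ B]
    (A : B →L[ℂ] B) (hspec : RealSpectrum A) {z : ℂ} (hz : z.im ≠ 0) (hzi : z ≠ I) :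
    res ((1 : B →L[ℂ] B) + (2 * I) • Ring.inverse (A - I • (1 : B →L[ℂ] B)))
      ((z + I) / (z - I)) =
    ((z - I) / (2 * I)) • (1 : B →L[ℂ] B) - ((z - I) ^ 2 / (2 * I)) • res A z := by
  have hU : IsUnit (A - I • (1 : B →L[ℂ] B)) := by
    have := (cct_isUnit A hspec (z := I) (by simp)).neg
    rwa [neg_sub] at this
  have hV := cct_isUnit A hspec hz
  have h0 : z - I ≠ 0 := sub_ne_zero.2 hzi
  have hI : (2 * I : ℂ) ≠ 0 := by simp
  set X := Ring.inverse (A - I • (1 : B →L[ℂ] B)) with hX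
  have hAX : A * X = 1 + I • X := by
    have := Ring.mul_inverse_cancel _ hU
    rw [← hX, sub_mul, smul_mul_assoc, one_mul] at this
    rw [← this]; abel
  have hXA : X * A = 1 + I • X := by
    have := Ring.inverse_mul_cancel _ hU
    rw [← hX, mul_sub, mul_smul_comm, mul_one] at this
    rw [← this]; abel
  have hW : ((z + I) / (z - I)) • (1 : B →L[ℂ] B) - (1 + (2 * I) • X)
      = (-(2 * I) / (z - I)) • ((z • (1 : B →L[ℂ] B) - A) * X) := by
    rw [sub_mul, hAX, smul_mul_assoc, one_mul]
    match_scalars <;> field_simp <;> ring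
  have hW' : ((z + I) / (z - I)) • (1 : B →L[ℂ] B) - (1 + (2 * I) • X)
      = (-(2 * I) / (z - I)) • (X * (z • (1 : B →L[ℂ] B) - A)) := by
    rw [mul_sub, hXA, mul_smul_comm, mul_one]
    match_scalars <;> field_simp <;> ring
  set Y := res A z with hY
  have hAY : A * Y = z • Y - 1 := by
    have := Ring.mul_inverse_cancel _ hV
    change _ * Y = 1 at this
    rw [sub_mul, smul_mul_assoc, one_mul] at this
    rw [← this]; abel
  have hYA : Y * A = z • Y - 1 := by
    have := Ring.inverse_mul_cancel _ hV
    change Y * _ = 1 at this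
    rw [mul_sub, mul_smul_comm, mul_one] at this
    rw [← this]; abel
  have hT : ((z - I) / (2 * I)) • (1 : B →L[ℂ] B) - ((z - I) ^ 2 / (2 * I)) • Y
      = (-(z - I) / (2 * I)) • ((A - I • (1 : B →L[ℂ] B)) * Y) := by
    rw [sub_mul, hAY, smul_mul_assoc, one_mul]
    match_scalars <;> field_simp <;> ring
  have hT' : ((z - I) / (2 * I)) • (1 : B →L[ℂ] B) - ((z - I) ^ 2 / (2 * I)) • Y
      = (-(z - I) / (2 * I)) • (Y * (A - I • (1 : B →L[ℂ] B))) := by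
    rw [mul_sub, hYA, mul_smul_comm, mul_one]
    match_scalars <;> field_simp <;> ring
  have hs : (-(2 * I) / (z - I)) * (-(z - I) / (2 * I)) = 1 := by field_simp
  have e1 : (((z + I) / (z - I)) • (1 : B →L[ℂ] B) - (1 + (2 * I) • X)) *
      (((z - I) / (2 * I)) • (1 : B →L[ℂ] B) - ((z - I) ^ 2 / (2 * I)) • Y) = 1 := by
    rw [hW, hT, smul_mul_smul_comm, hs, one_smul, mul_assoc, ← mul_assoc X,
      Ring.inverse_mul_cancel _ hU, one_mul]
    exact Ring.mul_inverse_cancel _ hV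
  have e2 : (((z - I) / (2 * I)) • (1 : B →L[ℂ] B) - ((z - I) ^ 2 / (2 * I)) • Y) *
      (((z + I) / (z - I)) • (1 : B →L[ℂ] B) - (1 + (2 * I) • X)) = 1 := by
    rw [hW', hT', smul_mul_smul_comm, mul_comm (-(z - I) / (2 * I)), hs, one_smul, mul_assoc,
      ← mul_assoc _ X, Ring.mul_inverse_cancel _ hU, one_mul]
    exact Ring.inverse_mul_cancel _ hV
  exact Ring.inverse_unit ⟨_, _, e1, e2⟩

lemma cct_res_continuousOn {B : Type*} [NormedAddCommGroup B] [NormedSpace ℂ B]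
    [CompleteSpace B] (A : B →L[ℂ] B) (hspec : RealSpectrum A) :
    ContinuousOn (res A) {z : ℂ | z.im ≠ 0} := by
  intro z hz
  apply ContinuousAt.continuousWithinAt
  obtain ⟨u, hu⟩ := cct_isUnit A hspec hz
  have h1 : ContinuousAt Ring.inverse (z • (1 : B →L[ℂ] B) - A) := by
    rw [← hu]; exact NormedRing.inverse_continuousAt u
  exact ContinuousAt.comp (f := fun z : ℂ => z • (1 : B →L[ℂ] B) - A) h1 (by fun_prop)

lemma cct_normsq {z : ℂ} (hz : z ≠ I) :
    |‖(z + I) / (z - I)‖ - 1| ≤ 4 * |z.im| * (‖z - I‖⁻¹) ^ 2 := by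
  have h0 : 0 < ‖z - I‖ := norm_pos_iff.2 (sub_ne_zero.2 hz)
  set r := ‖(z + I) / (z - I)‖ with hr
  have hr0 : 0 ≤ r := norm_nonneg _
  have h1 : r ^ 2 - 1 = 4 * z.im * (‖z - I‖⁻¹) ^ 2 := by
    rw [hr, norm_div, div_pow, inv_pow]
    field_simp
    rw [← normSq_eq_norm_sq, ← normSq_eq_norm_sq, normSq_apply, normSq_apply]
    simp
    ring
  have h2 : |r ^ 2 - 1| = 4 * |z.im| * (‖z - I‖⁻¹) ^ 2 := by
    rw [h1, abs_mul, abs_mul, abs_of_nonneg (sq_nonneg ‖z - I‖⁻¹)]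
    norm_num
  rw [← h2, show r ^ 2 - 1 = (r - 1) * (r + 1) by ring, abs_mul]
  apply le_mul_of_one_le_right (abs_nonneg _)
  rw [abs_of_nonneg (by linarith)]
  linarith

lemma cct_integrable_A {B : Type*} [NormedAddCommGroup B] [NormedSpace ℂ B]
    [CompleteSpace B] (A : B →L[ℂ] B)
    (hspec : RealSpectrum A) (hres : TemperateResolventLoc A)
    (φ : ℂ → ℂ) (hφ : ContDiff ℝ 1 φ) (hφ_supp : HasCompactSupport φ)
    (hφ_one : (1 : ℂ) ∉ tsupport φ)
    (hφ_dbar : ∀ N : ℕ, ∃ C : ℝ, ∀ w : ℂ, ‖dbar φ w‖ ≤ C * |‖w‖ - 1| ^ N)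
    (D : ℂ → ℂ)
    (hD : ∀ z : ℂ, z ≠ I → D z = dbar φ ((z + I) / (z - I)) *
      (starRingEnd ℂ) (-2 * I / (z - I) ^ 2)) :
    Integrable (fun z : ℂ => D z • res A z) := by
  -- the good set
  have hae : ∀ᵐ z : ℂ, z ∈ {z : ℂ | z.im ≠ 0} ∩ {z : ℂ | z ≠ I} := by
    filter_upwards [cct_ae_im, Measure.ae_ne volume I] with z h1 h2 using ⟨h1, h2⟩
  have hopen : IsOpen ({z : ℂ | z.im ≠ 0} ∩ {z : ℂ | z ≠ I}) :=
    (isOpen_ne_fun continuous_im continuous_const).inter isOpen_ne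
  have hmeas : AEStronglyMeasurable (fun z : ℂ => D z • res A z) volume := by
    have hc : ContinuousOn (fun z : ℂ => D z • res A z)
        ({z : ℂ | z.im ≠ 0} ∩ {z : ℂ | z ≠ I}) := by
      apply ContinuousOn.fun_smul
      · have : ContinuousOn (fun z : ℂ => dbar φ ((z + I) / (z - I)) *
            (starRingEnd ℂ) (-2 * I / (z - I) ^ 2)) {z : ℂ | z ≠ I} := by
          have hd := cct_dbar_continuous φ hφ
          have h0 : ∀ z ∈ {z : ℂ | z ≠ I}, z - I ≠ 0 := fun z hz => sub_ne_zero.2 hz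
          apply ContinuousOn.mul
          · apply hd.comp_continuousOn
            exact ContinuousOn.div (by fun_prop) (by fun_prop) h0
          · apply continuous_conj.comp_continuousOn
            exact ContinuousOn.div (by fun_prop) (by fun_prop) (fun z hz => pow_ne_zero _ (h0 z hz))
        exact (this.congr (fun z hz => hD z hz)).mono Set.inter_subset_right
      · exact (cct_res_continuousOn A hspec).mono Set.inter_subset_left
    have := hc.aestronglyMeasurable (μ := volume) hopen.measurableSet
    rwa [Measure.restrict_eq_self_of_ae_mem hae] at this
  -- geometry of the support
  obtain ⟨δ, hδ, hδ'⟩ : ∃ δ > 0, ∀ w ∈ tsupport φ, δ ≤ ‖w - 1‖ := by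
    have : (tsupport φ)ᶜ ∈ nhds (1:ℂ) := (isClosed_tsupport φ).isOpen_compl.mem_nhds hφ_one
    obtain ⟨δ, hδ, h⟩ := Metric.mem_nhds_iff.1 this
    refine ⟨δ, hδ, fun w hw => ?_⟩
    by_contra hlt
    exact h (by rw [Metric.mem_ball, dist_eq_norm]; exact not_le.1 hlt) hw
  obtain ⟨M, hM⟩ : ∃ M, ∀ w ∈ tsupport φ, ‖w‖ ≤ M := hφ_supp.isCompact.isBounded.exists_norm_le
  set R : ℝ := 2 / δ + 1 with hR
  have hR1 : 1 ≤ R := by rw [hR]; have : 0 < 2 / δ := by positivity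
                         linarith
  obtain ⟨C, N, hC, hN, hresb⟩ := hres R (by linarith)
  obtain ⟨C₁, hC₁⟩ := hφ_dbar ⌈N⌉₊
  set n := ⌈N⌉₊ with hn
  have hNn : N ≤ n := Nat.le_ceil N
  set S : ℝ := (M + 1) / 2 with hS
  set K : ℝ := |C₁| * (4 * S ^ 2) ^ n * (2 * S ^ 2) * C * R ^ ((n:ℝ) - N) with hK
  have hbd : ∀ᵐ z : ℂ, ‖D z • res A z‖ ≤ (Metric.closedBall (0:ℂ) R).indicator (fun _ => K) z := by
    filter_upwards [hae] with z hz
    obtain ⟨him, hzi⟩ := hz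
    have him' : z.im ≠ 0 := him
    have hzi' : z ≠ I := hzi
    have h0 : z - I ≠ 0 := sub_ne_zero.2 hzi'
    have hp : 0 < ‖z - I‖ := norm_pos_iff.2 h0
    by_cases hw : (z + I) / (z - I) ∈ tsupport φ
    · have hw1 : (z + I) / (z - I) - 1 = 2 * I / (z - I) := by field_simp; ring
      have hnw : ‖(z + I) / (z - I) - 1‖ = 2 * ‖z - I‖⁻¹ := by
        rw [hw1, norm_div]; simp [div_eq_mul_inv]
      have ha := hδ' _ hw
      have hb := hM _ hw
      have hs : ‖z - I‖⁻¹ ≤ S := by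
        have := norm_sub_le ((z + I) / (z - I)) 1
        rw [hnw, norm_one] at this
        rw [hS]; linarith
      have hzn : ‖z‖ ≤ R := by
        have h3 : ‖z - I‖ ≤ 2 / δ := by
          rw [hnw, ← div_eq_mul_inv, le_div_iff₀ hp] at ha
          rw [le_div_iff₀ hδ]; linarith
        have h4 : ‖z‖ ≤ ‖z - I‖ + ‖I‖ := by
          simpa using norm_add_le (z - I) I
        rw [norm_I] at h4
        linarith
      have hmem : z ∈ Metric.closedBall (0:ℂ) R := by simpa using hzn
      rw [Set.indicator_of_mem hmem]
      have hs0 : 0 < ‖z - I‖⁻¹ := inv_pos.2 hp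
      have hS0 : 0 ≤ S := hs0.le.trans hs
      have hy : 0 < |z.im| := abs_pos.2 him'
      have hyR : |z.im| ≤ R := (abs_im_le_norm z).trans hzn
      have e1 : ‖dbar φ ((z + I) / (z - I))‖ ≤ |C₁| * (4 * S ^ 2) ^ n * |z.im| ^ n := by
        calc _ ≤ C₁ * |‖(z + I) / (z - I)‖ - 1| ^ n := hC₁ _
          _ ≤ |C₁| * (4 * |z.im| * S ^ 2) ^ n := by
            gcongr
            · exact le_abs_self _
            · exact (cct_normsq hzi').trans (by gcongr)
          _ = _ := by rw [mul_assoc |C₁|, ← mul_pow]; congr 2; ring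
      have e2 : ‖(starRingEnd ℂ) (-2 * I / (z - I) ^ 2)‖ ≤ 2 * S ^ 2 := by
        rw [RCLike.norm_conj, norm_div, norm_pow, div_eq_mul_inv, ← inv_pow]
        have : ‖(-2 * I : ℂ)‖ = 2 := by simp
        rw [this]
        gcongr
      have e3 := hresb z him' hzn
      have e4 : |z.im| ^ n * |z.im| ^ (-N) ≤ R ^ ((n:ℝ) - N) := by
        rw [← Real.rpow_natCast, ← Real.rpow_add hy, ← sub_eq_add_neg]
        exact Real.rpow_le_rpow hy.le hyR (by linarith)
      rw [norm_smul, hD z hzi', norm_mul]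
      calc _ ≤ (|C₁| * (4 * S ^ 2) ^ n * |z.im| ^ n) * (2 * S ^ 2) * (C * |z.im| ^ (-N)) := by
            gcongr
        _ = |C₁| * (4 * S ^ 2) ^ n * (2 * S ^ 2) * C * (|z.im| ^ n * |z.im| ^ (-N)) := by ring
        _ ≤ _ := by
          rw [hK]; gcongr
    · rw [hD z hzi', cct_dbar_zero _ _ hw]
      rw [zero_mul, zero_smul, norm_zero]
      by_cases hmem : z ∈ Metric.closedBall (0:ℂ) R
      · rw [Set.indicator_of_mem hmem]
        have : 0 ≤ R ^ ((n:ℝ) - N) := Real.rpow_nonneg (by linarith) _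
        positivity
      · rw [Set.indicator_of_notMem hmem]
  refine Integrable.mono' ?_ hmeas hbd
  rw [integrable_indicator_iff Metric.isClosed_closedBall.measurableSet]
  exact integrableOn_const (isCompact_closedBall _ _).measure_lt_top.ne

/-- (6.2): compatibility of the calculus with the Cayley transform
`C(z) = (z + i)/(z − i)`: `(φ ∘ C)(A) = φ(B)` where `B = 1 + 2i(A − i·1)⁻¹` is the
Cayley transform of `A`, both sides being given by Bochner-convergent integrals. -/
theorem cayley_transform_calculus {B : Type*} [NormedAddCommGroup B] [NormedSpace ℂ B]
    [CompleteSpace B] (A : B →L[ℂ] B)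
    (hspec : RealSpectrum A) (hres : TemperateResolventLoc A)
    (Bop : B →L[ℂ] B)
    (hBop : Bop = (1 : B →L[ℂ] B)
      + (2 * Complex.I) • Ring.inverse (A - Complex.I • (1 : B →L[ℂ] B)))
    (φ : ℂ → ℂ) (hφ_smooth : ContDiff ℝ (⊤ : ℕ∞) φ) (hφ_supp : HasCompactSupport φ)
    (hφ_one : (1 : ℂ) ∉ tsupport φ)
    (hφ_dbar : ∀ N : ℕ, ∃ C : ℝ, ∀ w : ℂ, ‖dbar φ w‖ ≤ C * |‖w‖ - 1| ^ N)
    (ψ : ℂ → ℂ)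
    (hψ : ∀ z : ℂ, ψ z = if z = Complex.I then 0 else φ ((z + Complex.I) / (z - Complex.I))) :
    Integrable (fun w : ℂ => dbar φ w • res Bop w) ∧
    Integrable (fun z : ℂ => dbar ψ z • res A z) ∧
    (-(1/(π:ℂ))) • ∫ w : ℂ, dbar φ w • res Bop w =
      (-(1/(π:ℂ))) • ∫ z : ℂ, dbar ψ z • res A z := by
  classical
  have hφ1 : ContDiff ℝ 1 φ := hφ_smooth.of_le (by exact_mod_cast le_top)
  have hD : ∀ z : ℂ, z ≠ I → dbar ψ z = dbar φ ((z + I) / (z - I)) *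
      (starRingEnd ℂ) (-2 * I / (z - I) ^ 2) := by
    intro z hz
    have he : ψ =ᶠ[nhds z] fun z => φ ((z + I) / (z - I)) := by
      filter_upwards [isOpen_ne.mem_nhds hz] with y hy
      rw [hψ, if_neg hy]
    rw [← cct_dbar_comp φ (hφ1.differentiable one_ne_zero) _ _ z (cct_cayley_hasDerivAt hz)]
    unfold dbar
    rw [he.fderiv_eq]
  have hA := cct_integrable_A A hspec hres φ hφ1 hφ_supp hφ_one hφ_dbar (dbar ψ) hD
  obtain ⟨hp, hp0⟩ := cct_pole φ hφ1 hφ_supp hφ_one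
  set f : ℂ → (B →L[ℂ] B) := fun w =>
    dbar φ w • res Bop w - (dbar φ w * (w - 1)⁻¹) • (1 : B →L[ℂ] B) with hf
  set s : Set ℂ := {z | z ≠ I} with hs
  have hsm : MeasurableSet s := isOpen_ne.measurableSet
  have hder : ∀ z ∈ s, HasFDerivWithinAt (fun z : ℂ => (z + I) / (z - I))
      ((ContinuousLinearMap.toSpanSingleton ℂ (-2 * I / (z - I) ^ 2)).restrictScalars ℝ) s z :=
    fun z hz => ((cct_cayley_hasDerivAt hz).hasFDerivAt.restrictScalars ℝ).hasFDerivWithinAt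
  have hinj : Set.InjOn (fun z : ℂ => (z + I) / (z - I)) s := by
    intro x hx y hy hxy
    have hx0 : x - I ≠ 0 := sub_ne_zero.2 hx
    have hy0 : y - I ≠ 0 := sub_ne_zero.2 hy
    simp only at hxy
    rw [div_eq_div_iff hx0 hy0] at hxy
    have : (2 * I) * (x - y) = 0 := by linear_combination -hxy
    have h2 : (2 * I : ℂ) ≠ 0 := by simp
    exact sub_eq_zero.1 ((mul_eq_zero.1 this).resolve_left h2)
  have himg : (fun z : ℂ => (z + I) / (z - I)) '' s = {w | w ≠ 1} := by
    ext w
    constructor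
    · rintro ⟨z, hz, rfl⟩ h
      have hz0 : z - I ≠ 0 := sub_ne_zero.2 hz
      simp only at h
      rw [div_eq_one_iff_eq hz0] at h
      have : (2 * I : ℂ) = 0 := by linear_combination h
      simp at this
    · intro hw
      have hw0 : w - 1 ≠ 0 := sub_ne_zero.2 hw
      refine ⟨I + 2 * I / (w - 1), ?_, ?_⟩
      · intro h
        have : 2 * I / (w - 1) = 0 := by linear_combination h
        simp [hw0] at this
      · simp only
        have e : I + 2 * I / (w - 1) - I = 2 * I / (w - 1) := by ring
        have hI : I ≠ 0 := I_ne_zero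
        rw [e]
        field_simp
        ring
  have hsae : ∀ᵐ z : ℂ, z ∈ s := Measure.ae_ne volume I
  have h1ae : ∀ᵐ z : ℂ, z ∈ {w : ℂ | w ≠ 1} := Measure.ae_ne volume 1
  have hkey : (fun z : ℂ => |((ContinuousLinearMap.toSpanSingleton ℂ
      (-2 * I / (z - I) ^ 2)).restrictScalars ℝ : ℂ →L[ℝ] ℂ).det| • f ((z + I) / (z - I)))
      =ᵐ[volume] fun z => dbar ψ z • res A z := by
    filter_upwards [cct_ae_im, hsae] with z him hz
    have hz0 : z - I ≠ 0 := sub_ne_zero.2 hz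
    have hI : I ≠ 0 := I_ne_zero
    rw [cct_det, abs_of_nonneg (normSq_nonneg _), hD z hz, hf]
    simp only
    rw [hBop, cct_res A hspec him hz]
    set c : ℂ := -2 * I / (z - I) ^ 2 with hc
    have h1 : ((z + I) / (z - I) - 1)⁻¹ = (z - I) / (2 * I) := by
      rw [show (z + I) / (z - I) - 1 = 2 * I / (z - I) by field_simp; ring, inv_div]
    have h2 : (z - I) ^ 2 / (2 * I) = - c⁻¹ := by
      rw [hc, inv_div]; field_simp
    have hc0 : c ≠ 0 := by rw [hc]; simp [hz0]
    rw [h1, h2, ← Complex.coe_smul, ← mul_conj]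
    rw [smul_sub, smul_smul, neg_smul, sub_neg_eq_add, smul_add, smul_smul, smul_smul,
      smul_smul, mul_assoc (c * _) _ ((z - I) / (2 * I)), add_sub_cancel_left]
    congr 1
    field_simp
  have hfi : Integrable f := by
    have h := (integrableOn_image_iff_integrableOn_abs_det_fderiv_smul volume hsm hder hinj f).2 ?_
    · rwa [himg, IntegrableOn, Measure.restrict_eq_self_of_ae_mem h1ae] at h
    · rw [IntegrableOn, Measure.restrict_eq_self_of_ae_mem hsae]
      exact hA.congr hkey.symm
  have hfint : ∫ w, f w = ∫ z, dbar ψ z • res A z := by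
    have h := integral_image_eq_integral_abs_det_fderiv_smul volume hsm hder hinj f
    rw [himg, Measure.restrict_eq_self_of_ae_mem h1ae,
      Measure.restrict_eq_self_of_ae_mem hsae] at h
    rw [h]
    exact integral_congr_ae hkey
  have hp1 := hp.smul_const (1 : B →L[ℂ] B)
  have hsum : (fun w : ℂ => dbar φ w • res Bop w) =
      fun w => f w + (dbar φ w * (w - 1)⁻¹) • (1 : B →L[ℂ] B) := by
    funext w; simp [hf]
  refine ⟨?_, hA, ?_⟩
  · rw [hsum]; exact hfi.add hp1
  · congr 1
    rw [hsum, integral_add hfi hp1, integral_smul_const, hp0, zero_smul, add_zero, hfint]
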